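/- Let M ≥ 1, γ > 0, r ∈ [0,1], and let F : ℝ^M → [0,∞] be a function such that: (i) there exists θ_0 ∈ ℝ^M with F(θ_0) < ∞ (feasibility), and (ii) whenever a sequence θ^k → θ in ℝ^M satisfies sup_k F(θ^k) < ∞, it holds that F(θ) ≤ liminf_{k→∞} F(θ^k). Then the function θ ↦ F(θ) + P_{γ,r}(θ) attains its minimum on ℝ^M, i.e. there exists θ* ∈ ℝ^M with F(θ*) + P_{γ,r}(θ*) ≤ F(θ) + P_{γ,r}(θ) for all θ ∈ ℝ^M. -/

import Mathlib

/-!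
The direct method. Writing `G = F + P`, `m = inf G < ∞`, take `θₖ` with `G θₖ → m`. The elementary
bound `x² ≥ 2|x| - 1` makes the penalty coercive uniformly in `r` (`abs_le_of_penalty_le`), so the
`θₖ` stay in a compact cube and a subsequence converges to some `θ*`. Along it `P` converges by
continuity, hence `F = G - P → m - P θ*`, and the lower semicontinuity of `F` along value-bounded
sequences gives `F θ* ≤ m - P θ*`, that is `G θ* ≤ m`.
-/

open scoped ENNReal
open Filter

/-- The elastic-net type penalty `P_{γ,r}(θ) = γ((1−r)/2 |θ|₂² + r |θ|₁)`. -/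
noncomputable def penalty (M : ℕ) (γ r : ℝ) (θ : Fin M → ℝ) : ℝ :=
  γ * ((1 - r) / 2 * ∑ j, (θ j) ^ 2 + r * ∑ j, |θ j|)

lemma continuous_penalty (M : ℕ) (γ r : ℝ) : Continuous (penalty M γ r) := by
  unfold penalty
  fun_prop

/-- Coercivity of the penalty, coordinate by coordinate. It covers `r = 0` and `r = 1` at once
because `(1 - r)/2 x² + r |x| ≥ |x| - (1 - r)/2`. -/
lemma abs_le_of_penalty_le {M : ℕ} {γ r C : ℝ} (hγ : 0 < γ) (hr : r ∈ Set.Icc (0 : ℝ) 1)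
    {θ : Fin M → ℝ} (h : penalty M γ r θ ≤ C) (j : Fin M) : |θ j| ≤ C / γ + 1 / 2 := by
  obtain ⟨h0, h1⟩ := hr
  have hsq : (θ j) ^ 2 ≤ ∑ i, (θ i) ^ 2 :=
    Finset.single_le_sum (f := fun i => (θ i) ^ 2) (fun i _ => sq_nonneg _) (Finset.mem_univ j)
  have habs : |θ j| ≤ ∑ i, |θ i| :=
    Finset.single_le_sum (f := fun i => |θ i|) (fun i _ => abs_nonneg _) (Finset.mem_univ j)
  have hC : (1 - r) / 2 * ∑ i, (θ i) ^ 2 + r * ∑ i, |θ i| ≤ C / γ := by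
    rw [le_div_iff₀ hγ, mul_comm]
    exact h
  have e1 := mul_le_mul_of_nonneg_left hsq (show 0 ≤ (1 - r) / 2 by linarith)
  have e2 := mul_le_mul_of_nonneg_left habs h0
  have e3 : (1 - r) / 2 * (2 * |θ j| - 1) ≤ (1 - r) / 2 * (θ j) ^ 2 := by
    refine mul_le_mul_of_nonneg_left ?_ (by linarith)
    nlinarith [sq_nonneg (|θ j| - 1), sq_abs (θ j)]
  linarith

/-- existence of a minimizer of the penalized learning objective `F + P_{γ,r}`,
given feasibility and sequential lower semicontinuity along value-bounded sequences. -/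
theorem stmt_9 (M : ℕ) (hM : 1 ≤ M) (γ r : ℝ) (hγ : 0 < γ) (hr : r ∈ Set.Icc (0:ℝ) 1)
    (F : (Fin M → ℝ) → ℝ≥0∞)
    (hfeas : ∃ θ0 : Fin M → ℝ, F θ0 < ⊤)
    (hlsc : ∀ (θk : ℕ → Fin M → ℝ) (θ : Fin M → ℝ),
      Tendsto θk atTop (nhds θ) → (⨆ k, F (θk k)) < ⊤ →
      F θ ≤ liminf (fun k => F (θk k)) atTop) :
    ∃ θstar : Fin M → ℝ, ∀ θ : Fin M → ℝ,
      F θstar + ENNReal.ofReal (penalty M γ r θstar) ≤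
        F θ + ENNReal.ofReal (penalty M γ r θ) := by
  obtain ⟨θ0, hθ0⟩ := hfeas
  set P : (Fin M → ℝ) → ℝ≥0∞ := fun θ => ENNReal.ofReal (penalty M γ r θ) with hP
  have hPcont : Continuous P := ENNReal.continuous_ofReal.comp (continuous_penalty M γ r)
  set m : ℝ≥0∞ := ⨅ θ, (F θ + P θ) with hm
  have hm_top : m ≠ ⊤ :=
    ((iInf_le _ θ0).trans_lt (ENNReal.add_lt_top.2 ⟨hθ0, ENNReal.ofReal_lt_top⟩)).ne
  have hex : ∀ k : ℕ, ∃ θ, F θ + P θ < m + ((k : ℝ≥0∞) + 1)⁻¹ := fun k =>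
    iInf_lt_iff.1 (ENNReal.lt_add_right hm_top
      (ENNReal.inv_ne_zero.2 (ENNReal.add_ne_top.2 ⟨ENNReal.natCast_ne_top k, ENNReal.one_ne_top⟩)))
  choose u hu using hex
  have hB_top : m + 1 ≠ ⊤ := ENNReal.add_ne_top.2 ⟨hm_top, ENNReal.one_ne_top⟩
  have hbd : ∀ k, F (u k) + P (u k) ≤ m + 1 := fun k =>
    (hu k).le.trans (add_le_add_right (ENNReal.inv_le_one.2 le_add_self) m)
  have hGlim : Tendsto (fun k => F (u k) + P (u k)) atTop (nhds m) := by
    have h1 : Tendsto (fun k : ℕ => m + ((k : ℝ≥0∞) + 1)⁻¹) atTop (nhds m) := by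
      have h2 := (tendsto_add_atTop_iff_nat 1).2 ENNReal.tendsto_inv_nat_nhds_zero
      simpa using (tendsto_const_nhds (x := m)).add h2
    exact tendsto_of_tendsto_of_tendsto_of_le_of_le tendsto_const_nhds h1
      (fun k => iInf_le _ (u k)) (fun k => (hu k).le)
  set R : ℝ := (m + 1).toReal / γ + 1 / 2
  have hmem : ∀ k, u k ∈ Set.Icc (fun _ : Fin M => -R) (fun _ => R) := by
    intro k
    have h1 : penalty M γ r (u k) ≤ (m + 1).toReal :=
      (ENNReal.ofReal_le_iff_le_toReal hB_top).1 (le_add_self.trans (hbd k))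
    have h2 := abs_le_of_penalty_le hγ hr h1
    exact ⟨fun j => (abs_le.1 (h2 j)).1, fun j => (abs_le.1 (h2 j)).2⟩
  obtain ⟨θs, -, φ, hφ, hlim⟩ := isCompact_Icc.tendsto_subseq hmem
  have hG' := hGlim.comp hφ.tendsto_atTop
  have hP' : Tendsto (fun k => P (u (φ k))) atTop (nhds (P θs)) :=
    (hPcont.tendsto θs).comp hlim
  have hF' : Tendsto (fun k => F (u (φ k))) atTop (nhds (m - P θs)) := by
    refine (ENNReal.Tendsto.sub hG' hP' (Or.inl hm_top)).congr fun k => ?_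
    exact ENNReal.add_sub_cancel_right ENNReal.ofReal_ne_top
  -- This keeps the truncated subtraction `m - P θs` in `ℝ≥0∞` honest.
  have hPm : P θs ≤ m := le_of_tendsto_of_tendsto' hP' hG' fun k => le_add_self
  have hFs : F θs ≤ m - P θs := by
    rw [← hF'.liminf_eq]
    refine hlsc _ θs hlim (lt_of_le_of_lt (iSup_le fun k => ?_) hB_top.lt_top)
    exact le_self_add.trans (hbd (φ k))
  refine ⟨θs, fun θ => ?_⟩
  calc F θs + P θs ≤ m - P θs + P θs := by gcongr
    _ = m := tsub_add_cancel_of_le hPm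
    _ ≤ F θ + P θ := iInf_le _ θ
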